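/- The monoid R(Φ_3iet) = { M_φ : φ is a 3iet preserving morphism with det M_φ ≠ 0 } of nonsingular incidence matrices of 3iet preserving morphisms (a monoid under matrix multiplication) is not finitely generated: there is no finite set S of matrices in R(Φ_3iet) such that every element of R(Φ_3iet) is a product of finitely many elements of S. -/

import Mathlib

/-!
Let `Mₙ` be the incidence matrix of the morphism `A ↦ ABⁿ`, `B ↦ ABⁿ⁺¹`, `C ↦ AC`. This morphism
preserves 3iet words, since the exchange with parameters `α, β, γ` is the first return map to the
first interval of the exchange with parameters `α + β + γ, nα + (n + 1)β, γ`, the returns having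
the images of the letters as itineraries.

Conversely, substituting `A ↦ 0`, `B ↦ 01`, `C ↦ 1` turns a 3iet word into a word whose letters are
balanced up to a bounded discrepancy. Applied to the images of 3iet words containing `(AC)ᵏ` and
`Bᵏ` for large `k`, this makes the binary abelianizations of `φ(AC)` and `φ(B)` parallel. Together
with the same relation for `φ` composed with `A ↦ A`, `B ↦ AB`, `C ↦ AC`, it forces every
nonsingular incidence matrix into the monoid of nonnegative integer matrices with left eigenvector
`(1, -1, 1)`. This monoid has finitely many units, because inverse nonnegative integer matrices
have entries at most `1`, so a finite set generates only finitely many of its irreducible elements.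
Comparing entries shows that every `Mₙ` with `n ≥ 1` is irreducible in it.
-/

/-- The three-letter alphabet {A, B, C}. -/
inductive Letter : Type
  | A | B | C
  deriving DecidableEq

/-- Left-closed 3-interval exchange transformation with parameters (α, β, γ),
defined piecewise on the domain [0, α+β+γ) (and extended by the same formulas
elsewhere). -/
noncomputable def Tleft (α β γ : ℝ) (x : ℝ) : ℝ :=
  if x < α then x + β + γ else if x < α + β then x - α + γ else x - α - β

/-- The inverse of `Tleft` on its domain. -/
noncomputable def TleftInv (α β γ : ℝ) (x : ℝ) : ℝ :=
  if x < γ then x + α + β else if x < β + γ then x + α - γ else x - β - γ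

/-- Right-closed 3-interval exchange transformation with parameters (α, β, γ),
defined piecewise on the domain (0, α+β+γ]. -/
noncomputable def Tright (α β γ : ℝ) (x : ℝ) : ℝ :=
  if x ≤ α then x + β + γ else if x ≤ α + β then x - α + γ else x - α - β

/-- The inverse of `Tright` on its domain. -/
noncomputable def TrightInv (α β γ : ℝ) (x : ℝ) : ℝ :=
  if x ≤ γ then x + α + β else if x ≤ β + γ then x + α - γ else x - β - γ

/-- ℤ-indexed iteration: nonnegative powers use `f`, negative powers use the
inverse map `g`. -/
noncomputable def zIter (f g : ℝ → ℝ) : ℤ → ℝ → ℝ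
  | Int.ofNat n => f^[n]
  | Int.negSucc n => g^[n + 1]

/-- The letter coding of a point, left-closed convention:
A on [0,α), B on [α,α+β), C on [α+β,α+β+γ). -/
noncomputable def codeLeft (α β : ℝ) (x : ℝ) : Letter :=
  if x < α then Letter.A else if x < α + β then Letter.B else Letter.C

/-- The letter coding of a point, right-closed convention:
A on (0,α], B on (α,α+β], C on (α+β,α+β+γ]. -/
noncomputable def codeRight (α β : ℝ) (x : ℝ) : Letter :=
  if x ≤ α then Letter.A else if x ≤ α + β then Letter.B else Letter.C

/-- The biinfinite word coding the orbit of x₀ under the left-closed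
3-interval exchange transformation with parameters (α, β, γ). -/
noncomputable def uLeft (α β γ x₀ : ℝ) (n : ℤ) : Letter :=
  codeLeft α β (zIter (Tleft α β γ) (TleftInv α β γ) n x₀)

/-- The biinfinite word coding the orbit of x₀ under the right-closed
3-interval exchange transformation with parameters (α, β, γ). -/
noncomputable def uRight (α β γ x₀ : ℝ) (n : ℤ) : Letter :=
  codeRight α β (zIter (Tright α β γ) (TrightInv α β γ) n x₀)

/-- A biinfinite word over {A,B,C} is a 3iet word if it codes the orbit of a
point under a 3-interval exchange transformation (in either convention) whose
parameters α, β, γ > 0 satisfy: α+β and β+γ are linearly independent over ℚ. -/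
def Is3ietWord (u : ℤ → Letter) : Prop :=
  ∃ α β γ x₀ : ℝ, 0 < α ∧ 0 < β ∧ 0 < γ ∧
    LinearIndependent ℚ ![α + β, β + γ] ∧
    ((x₀ ∈ Set.Ico (0 : ℝ) (α + β + γ) ∧ u = uLeft α β γ x₀) ∨
     (x₀ ∈ Set.Ioc (0 : ℝ) (α + β + γ) ∧ u = uRight α β γ x₀))

/-- A morphism over the alphabet {A,B,C}, determined by the images of the
three letters (as an endomorphism of the free monoid {A,B,C}*). -/
abbrev Morph := Letter → List Letter

/-- `IsImageWord φ u v` says that v is the biinfinite word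
···φ(u₋₂)φ(u₋₁)φ(u₀)φ(u₁)···, in which the block φ(u₀) starts at position 0:
`c m` is the position at which the block φ(u_m) starts. -/
def IsImageWord (φ : Morph) (u v : ℤ → Letter) : Prop :=
  ∃ c : ℤ → ℤ, c 0 = 0 ∧ (∀ m : ℤ, c (m + 1) = c m + (φ (u m)).length) ∧
    ∀ (m : ℤ) (i : ℕ) (h : i < (φ (u m)).length),
      v (c m + (i : ℤ)) = (φ (u m)).get ⟨i, h⟩

/-- A morphism is 3iet preserving if its letter images are nonempty (so that
it acts on biinfinite words) and it maps every 3iet word to a 3iet word. -/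
def Preserves3iet (φ : Morph) : Prop :=
  (∀ a, φ a ≠ []) ∧
  ∀ u v : ℤ → Letter, Is3ietWord u → IsImageWord φ u v → Is3ietWord v

/-- The letters in order A, B, C. -/
def ltr : Fin 3 → Letter := ![Letter.A, Letter.B, Letter.C]

/-- The incidence matrix of a morphism: its (i,j) entry is the number of
occurrences of the j-th letter in the image of the i-th letter. -/
def incMat (φ : Morph) : Matrix (Fin 3) (Fin 3) ℤ :=
  fun i j => ((φ (ltr i)).count (ltr j) : ℤ)

/-- The monoid R(Φ_3iet) of nonsingular incidence matrices of 3iet preserving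
morphisms. -/
def RPhi3iet : Set (Matrix (Fin 3) (Fin 3) ℤ) :=
  {M | ∃ φ : Morph, Preserves3iet φ ∧ incMat φ = M ∧ M.det ≠ 0}

open scoped Matrix

/-! ### Irreducible elements of a monoid -/

section Irreducible

variable {M : Type*} [Monoid M]

lemma exists_eq_unit_mul_mul_unit_of_irreducible {S : Set M} {p : M}
    (hmem : p ∈ Submonoid.closure S) (hp : Irreducible p) :
    ∃ u v : Mˣ, ∃ s ∈ S, p = u * s * v := by
  induction hmem using Submonoid.closure_induction_left with
  | one => exact absurd hp not_irreducible_one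
  | mul_left s hs q _ ih =>
    rcases of_irreducible_mul hp with ⟨e, rfl⟩ | ⟨e, rfl⟩
    · obtain ⟨u, v, r, hr, rfl⟩ := ih ((irreducible_units_mul e).1 hp)
      exact ⟨e * u, v, r, hr, by simp only [Units.val_mul, mul_assoc]⟩
    · exact ⟨1, e, s, hs, by rw [Units.val_one, one_mul]⟩

lemma finite_setOf_irreducible_mem_closure [Finite Mˣ] {S : Set M} (hS : S.Finite) :
    {p | p ∈ Submonoid.closure S ∧ Irreducible p}.Finite := by
  refine ((Set.finite_univ.prod (hS.prod Set.finite_univ)).image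
    fun x : Mˣ × M × Mˣ => x.1 * x.2.1 * x.2.2).subset ?_
  rintro p ⟨hmem, hp⟩
  obtain ⟨u, v, s, hs, rfl⟩ := exists_eq_unit_mul_mul_unit_of_irreducible hmem hp
  exact ⟨(u, s, v), ⟨trivial, hs, trivial⟩, rfl⟩

lemma finite_setOf_irreducible_coe_mem_closure {N : Submonoid M} [Finite Nˣ] {S : Set M}
    (hS : S.Finite) (hSN : S ⊆ N) :
    {p : N | (p : M) ∈ Submonoid.closure S ∧ Irreducible p}.Finite := by
  have hclosure : (Submonoid.closure ((↑) ⁻¹' S : Set N)).map N.subtype = Submonoid.closure S := by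
    rw [MonoidHom.map_mclosure, Submonoid.coe_subtype,
      Set.image_preimage_eq_of_subset (by simpa using hSN)]
  refine (finite_setOf_irreducible_mem_closure
    (hS.preimage Subtype.val_injective.injOn)).subset ?_
  rintro p ⟨hmem, hp⟩
  rw [← hclosure] at hmem
  obtain ⟨q, hq, hqp⟩ := hmem
  exact ⟨Subtype.val_injective hqp ▸ hq, hp⟩

end Irreducible

/-! ### Matrices fixing the direction of `(1, -1, 1)` -/

section NonnegMatrix

variable {n : Type*} [Fintype n] {X Y : Matrix n n ℤ}

lemma entry_mul_entry_le_mul_apply (hX : ∀ i j, 0 ≤ X i j) (hY : ∀ i j, 0 ≤ Y i j) (i j k : n) :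
    X i j * Y j k ≤ (X * Y) i k :=
  Finset.single_le_sum (f := fun l => X i l * Y l k)
    (fun l _ => mul_nonneg (hX i l) (hY l k)) (Finset.mem_univ j)

lemma entry_eq_zero_of_mul_apply_eq_zero (hX : ∀ i j, 0 ≤ X i j) (hY : ∀ i j, 0 ≤ Y i j)
    {i k : n} (h : (X * Y) i k = 0) (j : n) : X i j = 0 ∨ Y j k = 0 :=
  mul_eq_zero.1 <| le_antisymm (h ▸ entry_mul_entry_le_mul_apply hX hY i j k)
    (mul_nonneg (hX i j) (hY j k))

lemma entry_le_one_of_mul_eq_one [DecidableEq n] (hX : ∀ i j, 0 ≤ X i j) (hY : ∀ i j, 0 ≤ Y i j)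
    (h : X * Y = 1) (i j : n) : X i j ≤ 1 := by
  obtain ⟨k, hk⟩ : ∃ k, Y j k ≠ 0 := by
    by_contra! hrow
    have hYX : Y * X = 1 := mul_eq_one_comm.1 h
    simpa [Matrix.mul_apply, hrow] using congrFun₂ hYX j j
  calc X i j ≤ X i j * Y j k := le_mul_of_one_le_right (hX i j) (by have := hY j k; omega)
    _ ≤ (X * Y) i k := entry_mul_entry_le_mul_apply hX hY i j k
    _ ≤ 1 := by rw [h, Matrix.one_apply]; split_ifs <;> simp

end NonnegMatrix

/-- The monoid of nonnegative integer matrices with left eigenvector `(1, -1, 1)`. The incidence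
matrices of 3iet preserving morphisms are factored inside this larger but explicit monoid. -/
def altMonoid : Submonoid (Matrix (Fin 3) (Fin 3) ℤ) where
  carrier := {M | (∀ i j, 0 ≤ M i j) ∧ ∃ c : ℤ, ![1, -1, 1] ᵥ* M = c • ![1, -1, 1]}
  one_mem' := ⟨fun i j => by rw [Matrix.one_apply]; split_ifs <;> simp, 1, by simp⟩
  mul_mem' := by
    rintro X Y ⟨hX, c, hc⟩ ⟨hY, d, hd⟩
    refine ⟨fun i k => ?_, c * d, ?_⟩
    · rw [Matrix.mul_apply]
      exact Finset.sum_nonneg fun j _ => mul_nonneg (hX i j) (hY j k)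
    · rw [← Matrix.vecMul_vecMul, hc, Matrix.smul_vecMul, hd, smul_smul]

lemma vecMul_eq_smul_iff {M : Matrix (Fin 3) (Fin 3) ℤ} {c : ℤ} :
    ![1, -1, 1] ᵥ* M = c • ![1, -1, 1] ↔ M 0 0 - M 1 0 + M 2 0 = c ∧
      M 0 1 - M 1 1 + M 2 1 = -c ∧ M 0 2 - M 1 2 + M 2 2 = c := by
  simp [funext_iff, Fin.forall_fin_succ, Matrix.vecMul, dotProduct, Fin.sum_univ_three,
    sub_eq_add_neg]

instance : Finite altMonoidˣ := by
  have hentry (U : altMonoidˣ) (i j : Fin 3) : (U : altMonoid).1 i j ∈ Set.Icc (0 : ℤ) 1 :=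
    ⟨(U : altMonoid).2.1 i j, entry_le_one_of_mul_eq_one (U : altMonoid).2.1
      (↑U⁻¹ : altMonoid).2.1 (congrArg Subtype.val U.mul_inv) i j⟩
  refine Finite.of_injective
    (fun U i j => (⟨_, hentry U i j⟩ : Set.Icc (0 : ℤ) 1)) fun U V h => ?_
  ext i j
  exact congrArg Subtype.val (congrFun₂ h i j)

/-- The incidence matrix of the morphism `A ↦ ABⁿ`, `B ↦ ABⁿ⁺¹`, `C ↦ AC`. -/
def returnMat (n : ℕ) : Matrix (Fin 3) (Fin 3) ℤ := !![1, n, 0; 1, n + 1, 0; 1, 0, 1]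

lemma returnMat_mem_altMonoid (n : ℕ) : returnMat n ∈ altMonoid := by
  refine ⟨fun i j => ?_, 1, ?_⟩
  · fin_cases i <;> fin_cases j <;> exact Int.natCast_nonneg _
  · simp [returnMat]

lemma returnMat_injective : Function.Injective returnMat := fun m n h => by
  simpa [returnMat] using congrFun₂ h 0 1

/-- The unit of `altMonoid` that exchanges the letters `A` and `C`. -/
def swapAC : altMonoidˣ :=
  have hmem : !![0, 0, 1; 0, 1, 0; 1, 0, 0] ∈ altMonoid :=
    ⟨fun i j => by fin_cases i <;> fin_cases j <;> decide, 1, by decide⟩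
  have hinv : (!![0, 0, 1; 0, 1, 0; 1, 0, 0] : Matrix (Fin 3) (Fin 3) ℤ) *
    !![0, 0, 1; 0, 1, 0; 1, 0, 0] = 1 := by decide
  ⟨⟨_, hmem⟩, ⟨_, hmem⟩, Subtype.ext hinv, Subtype.ext hinv⟩

/-- The shape of a factor of `returnMat n` in `altMonoid` whose last column is `(0, 0, 1)`. -/
def reducedMat (a b c : ℤ) : Matrix (Fin 3) (Fin 3) ℤ :=
  !![a, b, 0; a + c - 1, b + 1, 0; c, 0, 1]

lemma reducedMat_one_zero_zero : reducedMat 1 0 0 = 1 := by decide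

section Factorization

variable {n : ℕ} {X Y : Matrix (Fin 3) (Fin 3) ℤ}

lemma sum_eq_returnMat_apply (h : X * Y = returnMat n) (i j : Fin 3) :
    X i 0 * Y 0 j + X i 1 * Y 1 j + X i 2 * Y 2 j = returnMat n i j := by
  rw [← h, Matrix.mul_apply, Fin.sum_univ_three]

lemma exists_entry_eq_one_of_mul_eq_returnMat (hX : X ∈ altMonoid) (hY : Y ∈ altMonoid)
    (h : X * Y = returnMat n) : ∃ k, X 2 k = 1 ∧ Y k 2 = 1 := by
  have hsum : X 2 0 * Y 0 2 + X 2 1 * Y 1 2 + X 2 2 * Y 2 2 = 1 := sum_eq_returnMat_apply h 2 2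
  have hnonneg (k : Fin 3) : 0 ≤ X 2 k * Y k 2 := mul_nonneg (hX.1 2 k) (hY.1 k 2)
  obtain ⟨k, hk⟩ : ∃ k, X 2 k * Y k 2 = 1 := by
    by_contra! hne
    have := hne 0; have := hne 1; have := hne 2
    have := hnonneg 0; have := hnonneg 1; have := hnonneg 2
    omega
  exact ⟨k, Int.eq_one_of_mul_eq_one_right (hX.1 2 k) hk,
    Int.eq_one_of_mul_eq_one_left (hY.1 k 2) hk⟩

lemma column_eq_zero_of_mul_eq_returnMat (hX : X ∈ altMonoid) (hY : Y ∈ altMonoid)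
    (h : X * Y = returnMat n) {k : Fin 3} (hk : Y k 2 ≠ 0) : X 0 k = 0 ∧ X 1 k = 0 :=
  ⟨(entry_eq_zero_of_mul_apply_eq_zero hX.1 hY.1 (by rw [h]; rfl) k).resolve_right hk,
    (entry_eq_zero_of_mul_apply_eq_zero hX.1 hY.1 (by rw [h]; rfl) k).resolve_right hk⟩

lemma not_entry_one_of_mul_eq_returnMat (hX : X ∈ altMonoid) (hY : Y ∈ altMonoid)
    (h : X * Y = returnMat n) : ¬ (X 2 1 = 1 ∧ Y 1 2 = 1) := by
  rintro ⟨hX21, hY12⟩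
  obtain ⟨hX01, hX11⟩ := column_eq_zero_of_mul_eq_returnMat hX hY h (k := 1) (by omega)
  obtain ⟨hX0, c, hc⟩ := id hX
  obtain ⟨hY0, d, hd⟩ := id hY
  rw [vecMul_eq_smul_iff] at hc hd
  have hY02 : Y 0 2 = 0 := by
    by_contra hne
    have := column_eq_zero_of_mul_eq_returnMat hX hY h hne
    have := hX0 2 0
    omega
  have hY22 : Y 2 2 = 0 := by
    by_contra hne
    have := column_eq_zero_of_mul_eq_returnMat hX hY h hne
    have := hX0 2 2
    omega
  have hY10 : Y 1 0 ≤ 1 := by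
    simpa [h, hX21, returnMat] using entry_mul_entry_le_mul_apply hX0 hY0 2 1 0
  have hcol : Y 0 0 = 0 ∧ Y 2 0 = 0 := by
    have := hY0 0 0; have := hY0 2 0
    omega
  have h00 : X 0 0 * Y 0 0 + X 0 1 * Y 1 0 + X 0 2 * Y 2 0 = 1 := sum_eq_returnMat_apply h 0 0
  simp [hcol, hX01] at h00

lemma eq_reducedMat_of_mul_eq_returnMat (hX : X ∈ altMonoid) (hY : Y ∈ altMonoid)
    (h : X * Y = returnMat n) (hX22 : X 2 2 = 1) (hY22 : Y 2 2 = 1) :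
    X = reducedMat (X 0 0) (X 0 1) (X 2 0) ∧ Y = reducedMat (Y 0 0) (Y 0 1) (Y 2 0) := by
  obtain ⟨hX02, hX12⟩ := column_eq_zero_of_mul_eq_returnMat hX hY h (k := 2) (by omega)
  obtain ⟨hX0, c, hc⟩ := id hX
  obtain ⟨hY0, d, hd⟩ := id hY
  rw [vecMul_eq_smul_iff] at hc hd
  have hY21 : Y 2 1 = 0 := by
    have := entry_eq_zero_of_mul_apply_eq_zero hX0 hY0 (i := 2) (k := 1) (by rw [h]; rfl) 2
    omega
  have hY02 : Y 0 2 = 0 := by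
    by_contra hne
    have h22 : X 2 0 * Y 0 2 + X 2 1 * Y 1 2 + X 2 2 * Y 2 2 = 1 := sum_eq_returnMat_apply h 2 2
    have := column_eq_zero_of_mul_eq_returnMat hX hY h hne
    have hX20 : X 2 0 = 1 := by omega
    rw [hX20, hX22, hY22] at h22
    have := mul_nonneg (hX0 2 1) (hY0 1 2); have := hY0 0 2
    omega
  have hY12 : Y 1 2 = 0 := by
    by_contra hne
    have := column_eq_zero_of_mul_eq_returnMat hX hY h hne
    have := hX0 2 1
    omega
  have hX21 : X 2 1 = 0 := by
    have := entry_eq_zero_of_mul_apply_eq_zero hX0 hY0 (i := 2) (k := 1) (by rw [h]; rfl) 1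
    have := hY0 0 1
    omega
  constructor
  · ext i j
    fin_cases i <;> fin_cases j <;> simp [reducedMat] <;> omega
  · ext i j
    fin_cases i <;> fin_cases j <;> simp [reducedMat] <;> omega

lemma eq_one_or_eq_one_of_reducedMat_mul_eq {a b c a' b' c' : ℤ}
    (hX : reducedMat a b c ∈ altMonoid) (hY : reducedMat a' b' c' ∈ altMonoid)
    (h : reducedMat a b c * reducedMat a' b' c' = returnMat n) :
    reducedMat a b c = 1 ∨ reducedMat a' b' c' = 1 := by
  have ha' : 0 ≤ a' := hY.1 0 0
  have hc' : 0 ≤ c' := hY.1 2 0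
  have hb : 0 ≤ b := hX.1 0 1
  have hc : 0 ≤ c := hX.1 2 0
  have h00 : a * a' + b * (a' + c' - 1) = 1 := by
    simpa [reducedMat, returnMat] using sum_eq_returnMat_apply h 0 0
  have h20 : c * a' + c' = 1 := by simpa [reducedMat, returnMat] using sum_eq_returnMat_apply h 2 0
  have h21 : c = 0 ∨ b' = 0 := by
    simpa [reducedMat, returnMat] using sum_eq_returnMat_apply h 2 1
  rcases hc.eq_or_lt with rfl | hcpos
  · left
    have ha : 0 ≤ a + 0 - 1 := hX.1 1 0
    obtain rfl : c' = 1 := by omega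
    have hmul : (a + b) * a' = 1 := by linear_combination h00
    have hab : a + b = 1 := Int.eq_one_of_mul_eq_one_right (by omega) hmul
    obtain ⟨rfl, rfl⟩ : a = 1 ∧ b = 0 := by omega
    exact reducedMat_one_zero_zero
  · right
    obtain rfl : b' = 0 := h21.resolve_left hcpos.ne'
    have ha'ne : a' ≠ 0 := by
      rintro rfl
      obtain rfl : c' = 1 := by omega
      simp at h00
    have hmul : a' ≤ c * a' := le_mul_of_one_le_left ha' hcpos
    obtain ⟨rfl, rfl⟩ : a' = 1 ∧ c' = 0 := by omega
    exact reducedMat_one_zero_zero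

end Factorization

lemma isUnit_or_isUnit_of_mul_eq_returnMat {n : ℕ} {X Y : altMonoid}
    (h : X.1 * Y.1 = returnMat n) (hX22 : X.1 2 2 = 1) (hY22 : Y.1 2 2 = 1) :
    IsUnit X ∨ IsUnit Y := by
  obtain ⟨hX, hY⟩ := eq_reducedMat_of_mul_eq_returnMat X.2 Y.2 h hX22 hY22
  have hone : X.1 = 1 ∨ Y.1 = 1 := by
    rw [hX, hY]
    exact eq_one_or_eq_one_of_reducedMat_mul_eq (hX ▸ X.2) (hY ▸ Y.2) (hX ▸ hY ▸ h)
  have isUnit_of_val_eq_one {Z : altMonoid} (hZ : Z.1 = 1) : IsUnit Z :=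
    (Subtype.ext hZ : Z = 1) ▸ isUnit_one
  exact hone.imp isUnit_of_val_eq_one isUnit_of_val_eq_one

lemma not_isUnit_returnMat {n : ℕ} (hn : n ≠ 0) :
    ¬ IsUnit (⟨returnMat n, returnMat_mem_altMonoid n⟩ : altMonoid) := by
  rintro ⟨U, hU⟩
  have hle := entry_le_one_of_mul_eq_one (U : altMonoid).2.1 (↑U⁻¹ : altMonoid).2.1
    (congrArg Subtype.val U.mul_inv) 1 1
  rw [hU] at hle
  change (n : ℤ) + 1 ≤ 1 at hle
  omega

lemma irreducible_returnMat {n : ℕ} (hn : n ≠ 0) :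
    Irreducible (⟨returnMat n, returnMat_mem_altMonoid n⟩ : altMonoid) := by
  refine ⟨not_isUnit_returnMat hn, fun X Y hXY => ?_⟩
  have h : X.1 * Y.1 = returnMat n := (congrArg Subtype.val hXY).symm
  obtain ⟨k, hk⟩ := exists_entry_eq_one_of_mul_eq_returnMat X.2 Y.2 h
  fin_cases k
  · have hswap : (X * swapAC).1 * (swapAC * Y).1 = returnMat n := by
      rw [← h, ← Submonoid.coe_mul, ← Submonoid.coe_mul, mul_assoc]
      exact congrArg (fun Z => (X * Z).1) (swapAC.mul_inv_cancel_left Y)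
    have hXentry : (X * swapAC).1 2 2 = 1 := by
      simpa [Matrix.mul_apply, Fin.sum_univ_three, swapAC] using hk.1
    have hYentry : (swapAC * Y).1 2 2 = 1 := by
      simpa [Matrix.mul_apply, Fin.sum_univ_three, swapAC] using hk.2
    exact (isUnit_or_isUnit_of_mul_eq_returnMat hswap hXentry hYentry).imp
      (Units.isUnit_mul_units X swapAC).1 (swapAC.isUnit_units_mul Y).1
  · exact absurd hk (not_entry_one_of_mul_eq_returnMat X.2 Y.2 h)
  · exact isUnit_or_isUnit_of_mul_eq_returnMat h hk.1 hk.2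

/-! ### Running sums along biinfinite words -/

section RunningSum

variable {σ G : Type*} [AddCommGroup G] {g : σ → G} {u : ℤ → σ} {z : ℤ → G}

/-- `z` sums up the weights `g` of the letters of the biinfinite word `u`; the value `z 0` is
left free. -/
def IsRunningSum (g : σ → G) (u : ℤ → σ) (z : ℤ → G) : Prop :=
  ∀ m, z (m + 1) = z m + g (u m)

lemma exists_isRunningSum (g : σ → G) (u : ℤ → σ) (z₀ : G) :
    ∃ z, z 0 = z₀ ∧ IsRunningSum g u z := by
  -- The powers of the shear `(m, x) ↦ (m + 1, x + g (u m))` of `ℤ × G` sum in both directions.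
  let shear : Equiv.Perm (ℤ × G) :=
    (Equiv.addRight (1 : ℤ)).prodShear fun m => Equiv.addRight (g (u m))
  have hsucc (m : ℤ) : (shear ^ (m + 1)) (0, z₀) = shear ((shear ^ m) (0, z₀)) := by
    rw [add_comm, zpow_one_add, Equiv.Perm.mul_apply]
  have hfst (m : ℤ) : ((shear ^ m) (0, z₀)).1 = m := by
    induction m using Int.induction_on with
    | zero => rfl
    | succ m ih => rw [hsucc]; exact congrArg (· + 1) ih
    | pred m ih =>
      have hpred := congrArg Prod.fst (hsucc (-(m : ℤ) - 1))
      rw [sub_add_cancel, ih] at hpred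
      exact eq_sub_of_add_eq hpred.symm
  refine ⟨fun m => ((shear ^ m) (0, z₀)).2, rfl, fun m => ?_⟩
  simp only [hsucc]
  exact congrArg (fun k => ((shear ^ m) (0, z₀)).2 + g (u k)) (hfst m)

lemma IsRunningSum.eq_of_apply_zero_eq {z' : ℤ → G} (hz : IsRunningSum g u z)
    (hz' : IsRunningSum g u z') (h0 : z 0 = z' 0) : z = z' := by
  funext m
  induction m using Int.induction_on with
  | zero => exact h0
  | succ m ih => rw [hz, hz', ih]
  | pred m ih =>
    have hpred := hz (-(m : ℤ) - 1)
    rw [sub_add_cancel, ih, ← sub_add_cancel (-(m : ℤ)) 1, hz'] at hpred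
    simpa using hpred.symm

/-- The finite word `w` is a factor of the biinfinite word `u`, starting at position `p`. -/
def OccursAt (w : List σ) (u : ℤ → σ) (p : ℤ) : Prop :=
  ∀ (i : ℕ) (h : i < w.length), u (p + i) = w.get ⟨i, h⟩

lemma IsRunningSum.apply_add_of_occursAt {w : List σ} {p : ℤ} (hz : IsRunningSum g u z)
    (hw : OccursAt w u p) {i : ℕ} (hi : i ≤ w.length) :
    z (p + i) = z p + ((w.take i).map g).sum := by
  induction i with
  | zero => simp
  | succ i ih =>
    rw [Nat.cast_succ, ← add_assoc, hz, ih (Nat.le_of_succ_le hi), hw i hi,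
      ← List.take_append_getElem hi, List.map_append, List.sum_append, ← add_assoc,
      List.map_singleton, List.sum_singleton, List.get_eq_getElem]

lemma IsRunningSum.apply_add_length {w : List σ} {p : ℤ} (hz : IsRunningSum g u z)
    (hw : OccursAt w u p) : z (p + w.length) = z p + (w.map g).sum := by
  rw [hz.apply_add_of_occursAt hw le_rfl, List.take_length]

end RunningSum

/-! ### Images of biinfinite words under morphisms -/

lemma exists_mem_Ico_of_strictMono {c : ℤ → ℤ} (hc : StrictMono c) (p : ℤ) :
    ∃ m, p ∈ Set.Ico (c m) (c (m + 1)) := by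
  induction p using Int.inductionOn' (b := c 0) with
  | zero => exact ⟨0, le_rfl, hc (lt_add_one 0)⟩
  | succ p _ ih =>
    obtain ⟨m, hm, hm'⟩ := ih
    rcases (Int.add_one_le_of_lt hm').eq_or_lt with heq | hlt
    · exact ⟨m + 1, heq.ge, heq ▸ hc (lt_add_one _)⟩
    · exact ⟨m, by omega, hlt⟩
  | pred p _ ih =>
    obtain ⟨m, hm, hm'⟩ := ih
    rcases hm.eq_or_lt with heq | hlt
    · have := hc (sub_one_lt m)
      exact ⟨m - 1, by omega, by rw [sub_add_cancel]; omega⟩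
    · exact ⟨m, by omega, by omega⟩

/-- The total `g`-weight of the word `φ a`. -/
def imageWeight {G : Type*} [AddMonoid G] (φ : Morph) (g : Letter → G) (a : Letter) : G :=
  ((φ a).map g).sum

section Image

variable {φ : Morph} {u v : ℤ → Letter} {c : ℤ → ℤ}

lemma isImageWord_iff : IsImageWord φ u v ↔ ∃ c : ℤ → ℤ, c 0 = 0 ∧
    IsRunningSum (fun a => ((φ a).length : ℤ)) u c ∧ ∀ m, OccursAt (φ (u m)) v (c m) :=
  Iff.rfl

lemma strictMono_of_isRunningSum_length (hφ : ∀ a, φ a ≠ [])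
    (hc : IsRunningSum (fun a => ((φ a).length : ℤ)) u c) : StrictMono c :=
  strictMono_int_of_lt_succ fun m => by
    rw [hc]
    exact lt_add_of_pos_right _ (Int.natCast_pos.2 (List.length_pos_iff.2 (hφ _)))

lemma exists_eq_blockStart_add (hφ : ∀ a, φ a ≠ [])
    (hc : IsRunningSum (fun a => ((φ a).length : ℤ)) u c) (p : ℤ) :
    ∃ m, ∃ i < (φ (u m)).length, p = c m + i := by
  obtain ⟨m, hm, hm'⟩ := exists_mem_Ico_of_strictMono (strictMono_of_isRunningSum_length hφ hc) p
  rw [show c (m + 1) = c m + (φ (u m)).length from hc m] at hm'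
  exact ⟨m, (p - c m).toNat, by omega, by omega⟩

lemma blockStart_add_injective (hφ : ∀ a, φ a ≠ [])
    (hc : IsRunningSum (fun a => ((φ a).length : ℤ)) u c) {m m' : ℤ} {i i' : ℕ}
    (hi : i < (φ (u m)).length) (hi' : i' < (φ (u m')).length) (h : c m + i = c m' + i') :
    m = m' ∧ i = i' := by
  have hmem {k : ℤ} {j : ℕ} (hj : j < (φ (u k)).length) :
      c k + j ∈ Set.Ico (c k) (c (Order.succ k)) := by
    rw [Order.succ_eq_add_one, show c (k + 1) = c k + (φ (u k)).length from hc k]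
    exact ⟨by omega, by omega⟩
  obtain rfl : m = m' := by
    by_contra hne
    exact Set.disjoint_left.1
      ((strictMono_of_isRunningSum_length hφ hc).monotone.pairwise_disjoint_on_Ico_succ hne)
      (hmem hi) (h ▸ hmem hi')
  exact ⟨rfl, by omega⟩

lemma exists_isImageWord (hφ : ∀ a, φ a ≠ []) (u : ℤ → Letter) : ∃ v, IsImageWord φ u v := by
  obtain ⟨c, hc0, hc⟩ := exists_isRunningSum (fun a => ((φ a).length : ℤ)) u 0
  choose m i hi hp using exists_eq_blockStart_add hφ hc
  refine ⟨fun p => (φ (u (m p)))[i p]'(hi p), isImageWord_iff.2 ⟨c, hc0, hc, fun k j hj => ?_⟩⟩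
  obtain ⟨hm, hij⟩ := blockStart_add_injective hφ hc (hi _) hj (hp (c k + j)).symm
  simp only [hm, hij, List.get_eq_getElem]

lemma IsRunningSum.comp_blockStart {G : Type*} [AddCommGroup G] {g : Letter → G} {z : ℤ → G}
    (hz : IsRunningSum g v z) (hc : IsRunningSum (fun a => ((φ a).length : ℤ)) u c)
    (hocc : ∀ m, OccursAt (φ (u m)) v (c m)) : IsRunningSum (imageWeight φ g) u (z ∘ c) :=
  fun m => by
    rw [Function.comp_apply, hc, hz.apply_add_length (hocc m)]
    rfl

end Image

/-! ### Orbits of 3-interval exchange transformations -/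

/-- The interval from `p` to `q` that is closed on the left if `b` and closed on the right
otherwise, so that both conventions for 3iet words are treated at once. -/
def HalfOpen (b : Bool) (p q : ℝ) : Set ℝ :=
  bif b then Set.Ico p q else Set.Ioc p q

section HalfOpen

variable {b : Bool} {p q r x : ℝ}

lemma add_mem_halfOpen {p' q' d : ℝ} (hx : x ∈ HalfOpen b p q) (hp : p' ≤ p + d)
    (hq : q + d ≤ q') : x + d ∈ HalfOpen b p' q' := by
  cases b <;> exact ⟨by linarith [hx.1], by linarith [hx.2]⟩

lemma halfOpen_subset_halfOpen {p' q' : ℝ} (hp : p' ≤ p) (hq : q ≤ q') :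
    HalfOpen b p q ⊆ HalfOpen b p' q' := fun x hx => by
  simpa using add_mem_halfOpen (d := 0) hx (by simpa using hp) (by simpa using hq)

lemma mem_Icc_of_mem_halfOpen (hx : x ∈ HalfOpen b p q) : x ∈ Set.Icc p q := by
  cases b
  exacts [Set.Ioc_subset_Icc_self hx, Set.Ico_subset_Icc_self hx]

lemma mem_halfOpen_or_mem_halfOpen (hx : x ∈ HalfOpen b p r) (q : ℝ) :
    x ∈ HalfOpen b p q ∨ x ∈ HalfOpen b q r := by
  cases b
  exacts [(le_or_gt x q).imp (⟨hx.1, ·⟩) (⟨·, hx.2⟩), (lt_or_ge x q).imp (⟨hx.1, ·⟩) (⟨·, hx.2⟩)]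

end HalfOpen

/-- The numbers of letters `0` and `1` in the binary word `0`, `01` or `1` that replaces `A`, `B`
or `C`; this substitution turns 3iet words into Sturmian words. -/
def binaryParikh : Letter → ℤ × ℤ
  | .A => (1, 0)
  | .B => (1, 1)
  | .C => (0, 1)

/-- The linear form `(x, y) ↦ t x - s y`. Up to scaling it is the discrepancy of a binary word
with `x` letters `0` and `y` letters `1`, where the letters have frequencies `s : t`. -/
def slopeForm (s t : ℝ) : ℤ × ℤ →+ ℝ where
  toFun v := t * v.1 - s * v.2
  map_zero' := by simp
  map_add' v w := by push_cast [Prod.fst_add, Prod.snd_add]; ring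

lemma slopeForm_apply (s t : ℝ) (v : ℤ × ℤ) : slopeForm s t v = t * v.1 - s * v.2 := rfl

/-- The translation by which the exchange with parameters `α, β, γ` acts on the interval of the
given letter. -/
def displacement (α β γ : ℝ) (a : Letter) : ℝ := slopeForm (α + β) (β + γ) (binaryParikh a)

/-- The interval of the given letter. -/
def cell (b : Bool) (α β γ : ℝ) : Letter → Set ℝ
  | .A => HalfOpen b 0 α
  | .B => HalfOpen b α (α + β)
  | .C => HalfOpen b (α + β) (α + β + γ)

section Displacement

variable {α β γ : ℝ}

lemma displacement_A : displacement α β γ .A = β + γ := by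
  simp [displacement, slopeForm_apply, binaryParikh]

lemma displacement_B : displacement α β γ .B = γ - α := by
  simp only [displacement, slopeForm_apply, binaryParikh, Int.cast_one, mul_one]
  ring

lemma displacement_C : displacement α β γ .C = -(α + β) := by
  simp [displacement, slopeForm_apply, binaryParikh]

end Displacement

section Cell

variable {b : Bool} {α β γ x : ℝ}

lemma cell_subset (hα : 0 ≤ α) (hβ : 0 ≤ β) (hγ : 0 ≤ γ) (a : Letter) :
    cell b α β γ a ⊆ HalfOpen b 0 (α + β + γ) := by
  cases a <;> exact halfOpen_subset_halfOpen (by linarith) (by linarith)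

lemma exists_mem_cell (hx : x ∈ HalfOpen b 0 (α + β + γ)) : ∃ a, x ∈ cell b α β γ a := by
  rcases mem_halfOpen_or_mem_halfOpen hx α with hA | hBC
  · exact ⟨.A, hA⟩
  · rcases mem_halfOpen_or_mem_halfOpen hBC (α + β) with hB | hC
    exacts [⟨.B, hB⟩, ⟨.C, hC⟩]

lemma add_displacement_mem (hα : 0 ≤ α) (hβ : 0 ≤ β) (hγ : 0 ≤ γ) {a : Letter}
    (hx : x ∈ cell b α β γ a) : x + displacement α β γ a ∈ HalfOpen b 0 (α + β + γ) := by
  cases a <;> refine add_mem_halfOpen hx ?_ ?_ <;>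
    simp only [displacement_A, displacement_B, displacement_C] <;> linarith

lemma exists_add_displacement_eq (hx : x ∈ HalfOpen b 0 (α + β + γ)) :
    ∃ a, ∃ y ∈ cell b α β γ a, y + displacement α β γ a = x := by
  obtain ⟨a, ha⟩ : ∃ a, x - displacement α β γ a ∈ cell b α β γ a := by
    simp only [sub_eq_add_neg]
    rcases mem_halfOpen_or_mem_halfOpen hx γ with hC | hAB
    · exact ⟨.C, add_mem_halfOpen hC (by rw [displacement_C]; linarith)
        (by rw [displacement_C]; linarith)⟩
    · rcases mem_halfOpen_or_mem_halfOpen hAB (β + γ) with hB | hA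
      · exact ⟨.B, add_mem_halfOpen hB (by rw [displacement_B]; linarith)
          (by rw [displacement_B]; linarith)⟩
      · exact ⟨.A, add_mem_halfOpen hA (by rw [displacement_A]; linarith)
          (by rw [displacement_A]; linarith)⟩
  exact ⟨a, _, ha, sub_add_cancel _ _⟩

end Cell

/-- The points `y n` form an orbit of the exchange with parameters `α, β, γ` that is coded by the
word `u`. -/
structure IsCodedOrbit (b : Bool) (α β γ : ℝ) (u : ℤ → Letter) (y : ℤ → ℝ) : Prop where
  mem_cell : ∀ n, y n ∈ cell b α β γ (u n)
  isRunningSum : IsRunningSum (displacement α β γ) u y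

section ZIter

variable {f g : ℝ → ℝ} {D : Set ℝ} {x : ℝ}

lemma zIter_mem (hf : Set.MapsTo f D D) (hg : Set.MapsTo g D D) (hx : x ∈ D) (n : ℤ) :
    zIter f g n x ∈ D := by
  cases n
  exacts [hf.iterate _ hx, hg.iterate _ hx]

lemma zIter_add_one (hg : Set.MapsTo g D D) (hfg : ∀ x ∈ D, f (g x) = x) (hx : x ∈ D) (n : ℤ) :
    zIter f g (n + 1) x = f (zIter f g n x) := by
  match n with
  | .ofNat n => exact Function.iterate_succ_apply' f n x
  | .negSucc 0 => exact (hfg x hx).symm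
  | .negSucc (n + 1) =>
    change g^[n + 1] x = f (g^[n + 1 + 1] x)
    rw [Function.iterate_succ_apply' g (n + 1), hfg _ (hg.iterate _ hx)]

lemma zIter_eq_of_forall_apply_eq {y : ℤ → ℝ} (hf : ∀ n, f (y n) = y (n + 1))
    (hg : ∀ n, g (y (n + 1)) = y n) (n : ℤ) : zIter f g n (y 0) = y n := by
  match n with
  | .ofNat n =>
    change f^[n] (y 0) = y n
    induction n with
    | zero => rfl
    | succ n ih => rw [Function.iterate_succ_apply', ih, hf, Nat.cast_succ]
  | .negSucc n =>
    change g^[n + 1] (y 0) = y (Int.negSucc n)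
    induction n with
    | zero => exact hg (-1)
    | succ n ih => rw [Function.iterate_succ_apply', ih]; exact hg (Int.negSucc (n + 1))

end ZIter

/-- `f`, with inverse `g` and coding map `code`, is the 3-interval exchange transformation with
parameters `α, β, γ`. -/
structure IsExchange (b : Bool) (α β γ : ℝ) (f g : ℝ → ℝ) (code : ℝ → Letter) : Prop where
  code_eq {a x} (hx : x ∈ cell b α β γ a) : code x = a
  apply_eq {a x} (hx : x ∈ cell b α β γ a) : f x = x + displacement α β γ a
  inv_eq {a x} (hx : x ∈ cell b α β γ a) : g (x + displacement α β γ a) = x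

lemma isExchange_left {α β γ : ℝ} (hβ : 0 ≤ β) :
    IsExchange true α β γ (Tleft α β γ) (TleftInv α β γ) (codeLeft α β) := by
  constructor <;> rintro (_ | _ | _) x ⟨hx₁, hx₂⟩ <;>
    simp only [displacement_A, displacement_B, displacement_C, codeLeft, Tleft, TleftInv] <;>
    split_ifs <;> first | rfl | linarith

lemma isExchange_right {α β γ : ℝ} (hβ : 0 ≤ β) :
    IsExchange false α β γ (Tright α β γ) (TrightInv α β γ) (codeRight α β) := by
  constructor <;> rintro (_ | _ | _) x ⟨hx₁, hx₂⟩ <;>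
    simp only [displacement_A, displacement_B, displacement_C, codeRight, Tright, TrightInv] <;>
    split_ifs <;> first | rfl | linarith

namespace IsExchange

variable {b : Bool} {α β γ : ℝ} {f g : ℝ → ℝ} {code : ℝ → Letter}

lemma isCodedOrbit (hT : IsExchange b α β γ f g code) (hα : 0 ≤ α) (hβ : 0 ≤ β) (hγ : 0 ≤ γ)
    {x : ℝ} (hx : x ∈ HalfOpen b 0 (α + β + γ)) :
    IsCodedOrbit b α β γ (fun n => code (zIter f g n x)) (zIter f g · x) := by
  have hf : Set.MapsTo f (HalfOpen b 0 (α + β + γ)) (HalfOpen b 0 (α + β + γ)) := fun y hy => by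
    obtain ⟨a, ha⟩ := exists_mem_cell hy
    rw [hT.apply_eq ha]
    exact add_displacement_mem hα hβ hγ ha
  have hg : Set.MapsTo g (HalfOpen b 0 (α + β + γ)) (HalfOpen b 0 (α + β + γ)) := fun y hy => by
    obtain ⟨a, w, hw, rfl⟩ := exists_add_displacement_eq hy
    rw [hT.inv_eq hw]
    exact cell_subset hα hβ hγ a hw
  have hfg : ∀ y ∈ HalfOpen b 0 (α + β + γ), f (g y) = y := fun y hy => by
    obtain ⟨a, w, hw, rfl⟩ := exists_add_displacement_eq hy
    rw [hT.inv_eq hw, hT.apply_eq hw]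
  have hcell (n : ℤ) : zIter f g n x ∈ cell b α β γ (code (zIter f g n x)) := by
    obtain ⟨a, ha⟩ := exists_mem_cell (zIter_mem hf hg hx n)
    rwa [hT.code_eq ha]
  exact ⟨hcell, fun n => by rw [zIter_add_one hg hfg hx, hT.apply_eq (hcell n)]⟩

lemma eq_code_zIter (hT : IsExchange b α β γ f g code) {u : ℤ → Letter} {y : ℤ → ℝ}
    (hy : IsCodedOrbit b α β γ u y) : u = fun n => code (zIter f g n (y 0)) := by
  have hzIter := zIter_eq_of_forall_apply_eq (f := f) (g := g)
    (fun n => (hT.apply_eq (hy.mem_cell n)).trans (hy.isRunningSum n).symm)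
    (fun n => (congrArg g (hy.isRunningSum n)).trans (hT.inv_eq (hy.mem_cell n)))
  funext n
  rw [hzIter, hT.code_eq (hy.mem_cell n)]

end IsExchange

lemma is3ietWord_iff {u : ℤ → Letter} : Is3ietWord u ↔ ∃ α β γ : ℝ, 0 < α ∧ 0 < β ∧ 0 < γ ∧
    LinearIndependent ℚ ![α + β, β + γ] ∧ ∃ b y, IsCodedOrbit b α β γ u y := by
  constructor
  · rintro ⟨α, β, γ, x₀, hα, hβ, hγ, hli, ⟨hx₀, rfl⟩ | ⟨hx₀, rfl⟩⟩
    · exact ⟨α, β, γ, hα, hβ, hγ, hli, true, _,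
        (isExchange_left hβ.le).isCodedOrbit hα.le hβ.le hγ.le hx₀⟩
    · exact ⟨α, β, γ, hα, hβ, hγ, hli, false, _,
        (isExchange_right hβ.le).isCodedOrbit hα.le hβ.le hγ.le hx₀⟩
  · rintro ⟨α, β, γ, hα, hβ, hγ, hli, b, y, hy⟩
    have hy₀ := cell_subset hα.le hβ.le hγ.le _ (hy.mem_cell 0)
    refine ⟨α, β, γ, y 0, hα, hβ, hγ, hli, ?_⟩
    cases b
    · exact Or.inr ⟨hy₀, (isExchange_right hβ.le).eq_code_zIter hy⟩
    · exact Or.inl ⟨hy₀, (isExchange_left hβ.le).eq_code_zIter hy⟩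

/-! ### A family of 3iet preserving morphisms -/

lemma IsCodedOrbit.exists_of_isImageWord {φ : Morph} (hφ : ∀ a, φ a ≠ []) {b : Bool}
    {α β γ α' β' γ' : ℝ}
    (hweight : imageWeight φ (displacement α' β' γ') = displacement α β γ)
    (hcell : ∀ a, ∀ x ∈ cell b α β γ a, ∀ (i : ℕ) (hi : i < (φ a).length),
      x + (((φ a).take i).map (displacement α' β' γ')).sum ∈ cell b α' β' γ' (φ a)[i])
    {u v : ℤ → Letter} {y : ℤ → ℝ} (hy : IsCodedOrbit b α β γ u y) (hv : IsImageWord φ u v) :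
    ∃ y', IsCodedOrbit b α' β' γ' v y' := by
  obtain ⟨c, hc0, hc, hocc⟩ := isImageWord_iff.1 hv
  obtain ⟨y', hy'0, hy'⟩ := exists_isRunningSum (displacement α' β' γ') v (y 0)
  have hcomp : y' ∘ c = y :=
    (hweight ▸ hy'.comp_blockStart hc hocc).eq_of_apply_zero_eq hy.isRunningSum
      (by rw [Function.comp_apply, hc0, hy'0])
  refine ⟨y', fun p => ?_, hy'⟩
  obtain ⟨m, i, hi, rfl⟩ := exists_eq_blockStart_add hφ hc p
  rw [hy'.apply_add_of_occursAt (hocc m) hi.le, hocc m i hi, ← Function.comp_apply (f := y'), hcomp]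
  exact hcell _ _ (hy.mem_cell m) i hi

/-- The morphism `A ↦ ABⁿ`, `B ↦ ABⁿ⁺¹`, `C ↦ AC`: it codes returns to the initial interval of
length `α + β + γ` in the exchange with parameters `α + β + γ, nα + (n + 1)β, γ`. -/
def returnMorph (n : ℕ) : Morph
  | .A => .A :: List.replicate n .B
  | .B => .A :: List.replicate (n + 1) .B
  | .C => [.A, .C]

lemma returnMorph_ne_nil (n : ℕ) (a : Letter) : returnMorph n a ≠ [] := by
  cases a <;> exact List.cons_ne_nil _ _

lemma incMat_returnMorph (n : ℕ) : incMat (returnMorph n) = returnMat n := by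
  ext i j
  fin_cases i <;> fin_cases j <;>
    simp [incMat, ltr, returnMorph, returnMat, List.count_replicate]

lemma det_returnMat (n : ℕ) : (returnMat n).det = 1 := by
  simp [returnMat, Matrix.det_fin_three]

lemma sum_map_take_cons_replicate {σ : Type*} (g : σ → ℝ) (a b : σ) {i m : ℕ} (hi : i ≤ m) :
    (((a :: List.replicate m b).take (i + 1)).map g).sum = g a + i * g b := by
  simp [hi]

section ReturnMorph

variable (n : ℕ) (α β γ : ℝ)

lemma imageWeight_returnMorph_displacement :
    imageWeight (returnMorph n) (displacement (α + β + γ) (n * α + (n + 1) * β) γ) =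
      displacement α β γ := by
  funext a
  cases a <;> simp [imageWeight, returnMorph, displacement_A, displacement_B, displacement_C] <;>
    ring

variable {α β γ}

lemma add_sum_take_returnMorph_mem_cell (hα : 0 ≤ α) (hβ : 0 ≤ β) (hγ : 0 ≤ γ) {b : Bool}
    (a : Letter) (x : ℝ) (hx : x ∈ cell b α β γ a) (i : ℕ) (hi : i < (returnMorph n a).length) :
    x + (((returnMorph n a).take i).map
      (displacement (α + β + γ) (n * α + (n + 1) * β) γ)).sum ∈
        cell b (α + β + γ) (n * α + (n + 1) * β) γ (returnMorph n a)[i] := by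
  rcases i with _ | i
  · have hA : (returnMorph n a)[0] = .A := by cases a <;> rfl
    rw [hA, List.take_zero, List.map_nil, List.sum_nil, add_zero]
    exact cell_subset hα hβ hγ a hx
  cases a with
  | A =>
    have hin : i < n := by simpa [returnMorph] using hi
    have hin' : (i : ℝ) + 1 ≤ n := mod_cast hin
    simp only [returnMorph, sum_map_take_cons_replicate _ _ _ hin.le, List.getElem_cons_succ,
      List.getElem_replicate]
    refine add_mem_halfOpen hx ?_ ?_ <;> rw [displacement_A, displacement_B] <;> nlinarith
  | B =>
    have hin : i < n + 1 := by simpa [returnMorph] using hi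
    have hin' : (i : ℝ) ≤ n := mod_cast Nat.le_of_lt_succ hin
    simp only [returnMorph, sum_map_take_cons_replicate _ _ _ hin.le, List.getElem_cons_succ,
      List.getElem_replicate]
    refine add_mem_halfOpen hx ?_ ?_ <;> rw [displacement_A, displacement_B] <;> nlinarith
  | C =>
    obtain rfl : i = 0 := by simpa [returnMorph] using hi
    have hsum : (((returnMorph n .C).take 1).map
        (displacement (α + β + γ) (n * α + (n + 1) * β) γ)).sum =
          n * α + (n + 1) * β + γ := by
      simp [returnMorph, displacement_A]
    exact add_mem_halfOpen hx (by linarith) (by linarith)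

end ReturnMorph

lemma linearIndependent_pair_of_combination {s t s' t' : ℝ} (h : LinearIndependent ℚ ![s, t])
    (a b c d : ℤ) (hdet : a * d ≠ b * c) (hs' : s' = a * s + b * t) (ht' : t' = c * s + d * t) :
    LinearIndependent ℚ ![s', t'] := by
  rw [hs', ht']
  simpa only [zsmul_eq_mul] using
    (LinearIndependent.pair_add_smul_add_smul_iff a b c d).2 ⟨h, hdet⟩

lemma preserves3iet_returnMorph (n : ℕ) : Preserves3iet (returnMorph n) := by
  refine ⟨returnMorph_ne_nil n, fun u v hu hv => ?_⟩
  obtain ⟨α, β, γ, hα, hβ, hγ, hli, b, y, hy⟩ := is3ietWord_iff.1 hu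
  obtain ⟨y', hy'⟩ := hy.exists_of_isImageWord (returnMorph_ne_nil n)
    (imageWeight_returnMorph_displacement n α β γ)
    (add_sum_take_returnMorph_mem_cell n hα.le hβ.le hγ.le) hv
  have hli' : LinearIndependent ℚ
      ![α + β + γ + (n * α + (n + 1) * β), n * α + (n + 1) * β + γ] := by
    refine linearIndependent_pair_of_combination hli (n + 1) 1 n 1 (by simp) ?_ ?_ <;>
      push_cast <;> ring
  exact is3ietWord_iff.2 ⟨_, _, γ, by positivity, by positivity, hγ, hli', b, y', hy'⟩

lemma returnMat_mem_RPhi3iet (n : ℕ) : returnMat n ∈ RPhi3iet :=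
  ⟨returnMorph n, preserves3iet_returnMorph n, incMat_returnMorph n, by
    rw [det_returnMat]; exact one_ne_zero⟩

/-! ### 3iet words containing large powers of `AC` and `B` -/

section Powers

variable {σ G : Type*} [AddCommGroup G] {g : σ → G} {u : ℤ → σ} {z : ℤ → G} {w : List σ} {k : ℕ}
  {p : ℤ}

/-- The `k`-th power of the finite word `w` is a factor of the biinfinite word `u`, starting at
position `p`. -/
def PowerOccursAt (w : List σ) (k : ℕ) (u : ℤ → σ) (p : ℤ) : Prop :=
  ∀ i < k, OccursAt w u (p + i * w.length)

lemma IsRunningSum.apply_add_mul_length (hz : IsRunningSum g u z) (hw : PowerOccursAt w k u p) :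
    z (p + k * w.length) = z p + k • (w.map g).sum := by
  induction k with
  | zero => simp
  | succ k ih =>
    rw [Nat.cast_succ, add_one_mul, ← add_assoc, hz.apply_add_length (hw k k.lt_succ_self),
      ih fun i hi => hw i (Nat.lt_succ_of_lt hi), succ_nsmul, add_assoc]

lemma IsRunningSum.powerOccursAt {E : Set G} (hz : IsRunningSum g u z)
    (hE : ∀ n, z n ∈ E → OccursAt w u n) (hmem : ∀ i < k, z p + i • (w.map g).sum ∈ E) :
    PowerOccursAt w k u p := by
  induction k with
  | zero => exact fun i hi => absurd hi i.not_lt_zero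
  | succ k ih =>
    have hk := ih fun i hi => hmem i (Nat.lt_succ_of_lt hi)
    intro i hi
    rcases (Nat.le_of_lt_succ hi).eq_or_lt with rfl | hlt
    · exact hE _ (hz.apply_add_mul_length hk ▸ hmem i hi)
    · exact hk i hlt

end Powers

namespace IsCodedOrbit

variable {α β γ : ℝ} {u : ℤ → Letter} {y : ℤ → ℝ}

lemma eq_of_mem_cell (hy : IsCodedOrbit true α β γ u y) (hβ : 0 ≤ β) {n : ℤ} {a : Letter}
    (ha : y n ∈ cell true α β γ a) : u n = a :=
  ((isExchange_left hβ).code_eq (hy.mem_cell n)).symm.trans ((isExchange_left hβ).code_eq ha)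

lemma occursAt_B (hy : IsCodedOrbit true α β γ u y) (hβ : 0 ≤ β) {n : ℤ}
    (hn : y n ∈ cell true α β γ .B) : OccursAt [.B] u n := by
  intro i hi
  obtain rfl : i = 0 := by simpa using hi
  simpa using hy.eq_of_mem_cell hβ hn

lemma occursAt_AC (hy : IsCodedOrbit true α β γ u y) (hβ : 0 ≤ β) (hαγ : α ≤ γ) {n : ℤ}
    (hn : y n ∈ cell true α β γ .A) : OccursAt [.A, .C] u n := by
  have hA : u n = .A := hy.eq_of_mem_cell hβ hn
  have hC : u (n + 1) = .C := by
    refine hy.eq_of_mem_cell hβ ?_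
    rw [hy.isRunningSum, hA, displacement_A]
    exact add_mem_halfOpen hn (by linarith) (by linarith)
  intro i hi
  obtain rfl | rfl : i = 0 ∨ i = 1 := Nat.le_one_iff_eq_zero_or_eq_one.1 (Nat.le_of_lt_succ hi)
  exacts [by simpa using hA, by simpa using hC]

end IsCodedOrbit

lemma exists_isCodedOrbit_powerOccursAt {k : ℕ} {ε : ℝ} (hε : 0 < ε) (hkε : k * ε + ε < 1) :
    ∃ u y, IsCodedOrbit true 1 1 (1 + ε) u y ∧
      (∃ p, PowerOccursAt [.A, .C] k u p) ∧ ∃ p, PowerOccursAt [.B] k u p := by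
  -- The orbit of `1 - kε` climbs in steps of `ε`, first through the interval of `A`, reading `AC`
  -- each time, and then through the interval of `B`.
  have hkε₀ : 0 ≤ k * ε := by positivity
  obtain ⟨y, u, hy0, hy⟩ : ∃ y u, y 0 = 1 - k * ε ∧ IsCodedOrbit true 1 1 (1 + ε) u y :=
    ⟨_, _, rfl, (isExchange_left zero_le_one).isCodedOrbit zero_le_one zero_le_one (by linarith)
      ⟨by linarith, by linarith⟩⟩
  have hsumAC : ([Letter.A, .C].map (displacement 1 1 (1 + ε))).sum = ε := by
    simp only [List.map_cons, List.map_nil, List.sum_cons, List.sum_nil, displacement_A,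
      displacement_C]
    ring
  have hsumB : ([Letter.B].map (displacement 1 1 (1 + ε))).sum = ε := by simp [displacement_B]
  have hstep {i : ℕ} (hi : i < k) : 0 ≤ i * ε ∧ i * ε + ε ≤ k * ε := by
    have : (i : ℝ) + 1 ≤ k := mod_cast hi
    exact ⟨by positivity, by nlinarith⟩
  have hAC : PowerOccursAt [.A, .C] k u 0 := by
    refine hy.isRunningSum.powerOccursAt
      (fun n => hy.occursAt_AC zero_le_one (by linarith)) fun i hi => ?_
    rw [hsumAC, hy0, nsmul_eq_mul]
    exact ⟨by linarith [hstep hi], by linarith [hstep hi]⟩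
  have hyAC : y (0 + k * 2) = 1 := by
    have hclimb := hy.isRunningSum.apply_add_mul_length hAC
    rwa [hsumAC, hy0, nsmul_eq_mul, sub_add_cancel] at hclimb
  have hB : PowerOccursAt [.B] k u (0 + k * 2) := by
    refine hy.isRunningSum.powerOccursAt (fun n => hy.occursAt_B zero_le_one) fun i hi => ?_
    rw [hsumB, hyAC, nsmul_eq_mul]
    exact ⟨by linarith [hstep hi], by linarith [hstep hi]⟩
  exact ⟨u, y, hy, ⟨_, hAC⟩, ⟨_, hB⟩⟩

lemma linearIndependent_one_of_irrational {x : ℝ} (hx : Irrational x) :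
    LinearIndependent ℚ ![1, x] :=
  (LinearIndependent.pair_iff' one_ne_zero).2 fun a ha => hx ⟨a, by simpa [Rat.smul_def] using ha⟩

lemma exists_is3ietWord_powerOccursAt (k : ℕ) : ∃ u, Is3ietWord u ∧
    (∃ p, PowerOccursAt [.A, .C] k u p) ∧ ∃ p, PowerOccursAt [.B] k u p := by
  obtain ⟨ε, hirr, hε, hεk⟩ := exists_irrational_btwn (show (0 : ℝ) < 1 / (k + 1) by positivity)
  have hkε : k * ε + ε < 1 := by rw [lt_div_iff₀ (by positivity)] at hεk; linarith
  obtain ⟨u, y, hy, hpowers⟩ := exists_isCodedOrbit_powerOccursAt hε hkε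
  have hli : LinearIndependent ℚ ![(1 : ℝ) + 1, 1 + (1 + ε)] :=
    linearIndependent_pair_of_combination (linearIndependent_one_of_irrational hirr) 2 0 2 1
      (by decide) (by norm_num) (by push_cast; ring)
  exact ⟨u, is3ietWord_iff.2 ⟨1, 1, 1 + ε, one_pos, one_pos, by linarith, hli, true, y, hy⟩,
    hpowers⟩

/-! ### Incidence matrices of 3iet preserving morphisms -/

/-- Along every 3iet word, the running sums of the letter weights `ψ` stay in a strip
`0 ≤ t x - s y ≤ s + t` of positive slope. -/
def BoundedOn3ietWords (ψ : Letter → ℤ × ℤ) : Prop :=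
  ∀ u, Is3ietWord u → ∃ s t : ℝ, 0 < s ∧ 0 < t ∧
    ∃ z, IsRunningSum (slopeForm s t ∘ ψ) u z ∧ ∀ m, z m ∈ Set.Icc 0 (s + t)

lemma boundedOn3ietWords_binaryParikh : BoundedOn3ietWords binaryParikh := by
  intro u hu
  obtain ⟨α, β, γ, hα, hβ, hγ, -, b, y, hy⟩ := is3ietWord_iff.1 hu
  refine ⟨α + β, β + γ, by positivity, by positivity, y, hy.isRunningSum, fun m => ?_⟩
  have hm := mem_Icc_of_mem_halfOpen (cell_subset hα.le hβ.le hγ.le _ (hy.mem_cell m))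
  exact ⟨hm.1, by linarith [hm.2]⟩

lemma boundedOn3ietWords_imageWeight {φ : Morph} {ψ : Letter → ℤ × ℤ} (hφ : Preserves3iet φ)
    (hψ : BoundedOn3ietWords ψ) : BoundedOn3ietWords (imageWeight φ ψ) := by
  intro u hu
  obtain ⟨v, hv⟩ := exists_isImageWord hφ.1 u
  obtain ⟨s, t, hs, ht, z, hz, hbound⟩ := hψ v (hφ.2 u v hu hv)
  obtain ⟨c, -, hc, hocc⟩ := isImageWord_iff.1 hv
  have hweight : imageWeight φ (slopeForm s t ∘ ψ) = slopeForm s t ∘ imageWeight φ ψ := by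
    funext a
    simp only [imageWeight, Function.comp_apply, map_list_sum, List.map_map]
  exact ⟨s, t, hs, ht, z ∘ c, hweight ▸ hz.comp_blockStart hc hocc, fun m => hbound (c m)⟩

/-- The determinant of two vectors of the plane; it vanishes if and only if they are parallel. -/
def cross (v w : ℤ × ℤ) : ℤ := v.1 * w.2 - v.2 * w.1

lemma cross_eq_zero_of_forall_abs_mul_slopeForm_le {v w : ℤ × ℤ}
    (h : ∀ k : ℕ, ∃ s t : ℝ, 0 < s ∧ 0 < t ∧
      |k * slopeForm s t v| ≤ s + t ∧ |k * slopeForm s t w| ≤ s + t) : cross v w = 0 := by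
  obtain ⟨K, hK⟩ : ∃ K : ℕ, (K : ℝ) = |(w.1 + w.2 : ℝ)| + |(v.1 + v.2 : ℝ)| :=
    ⟨(w.1 + w.2).natAbs + (v.1 + v.2).natAbs, by push_cast [Nat.cast_natAbs]; rfl⟩
  obtain ⟨s, t, hs, ht, hv, hw⟩ := h (K + 1)
  have hst : 0 < s + t := add_pos hs ht
  have hidentity : (s + t) * ((K + 1 : ℕ) * (cross v w : ℝ)) =
      (w.1 + w.2) * ((K + 1 : ℕ) * slopeForm s t v) -
        (v.1 + v.2) * ((K + 1 : ℕ) * slopeForm s t w) := by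
    simp only [cross, slopeForm_apply]
    push_cast
    ring
  have hle : (s + t) * ((K + 1 : ℕ) * |(cross v w : ℝ)|) ≤ (s + t) * K := by
    calc (s + t) * ((K + 1 : ℕ) * |(cross v w : ℝ)|)
        = |(s + t) * ((K + 1 : ℕ) * (cross v w : ℝ))| := by
          rw [abs_mul, abs_mul, abs_of_pos hst, Nat.abs_cast]
      _ ≤ |(w.1 + w.2 : ℝ)| * (s + t) + |(v.1 + v.2 : ℝ)| * (s + t) := by
          rw [hidentity]
          refine (abs_sub _ _).trans ?_
          gcongr <;> rw [abs_mul] <;> gcongr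
      _ = (s + t) * K := by rw [hK]; ring
  have hlt : (K + 1) * |cross v w| < (K + 1) * 1 := by
    have := le_of_mul_le_mul_left hle hst
    have : (K + 1) * |cross v w| ≤ K := mod_cast this
    omega
  exact Int.abs_lt_one_iff.1 (lt_of_mul_lt_mul_left hlt (by positivity))

lemma BoundedOn3ietWords.cross_eq_zero {ψ : Letter → ℤ × ℤ} (hψ : BoundedOn3ietWords ψ) :
    cross (ψ .B) (ψ .A + ψ .C) = 0 := by
  refine cross_eq_zero_of_forall_abs_mul_slopeForm_le fun k => ?_
  obtain ⟨u, hu, ⟨p, hAC⟩, q, hB⟩ := exists_is3ietWord_powerOccursAt k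
  obtain ⟨s, t, hs, ht, z, hz, hbound⟩ := hψ u hu
  have hdiff (m n : ℤ) : |z m - z n| ≤ s + t := by
    simpa using abs_sub_le_of_le_of_le (hbound m).1 (hbound m).2 (hbound n).1 (hbound n).2
  refine ⟨s, t, hs, ht, ?_, ?_⟩
  · have hB' := hdiff (q + k * [Letter.B].length) q
    rwa [hz.apply_add_mul_length hB, add_sub_cancel_left, nsmul_eq_mul, List.map_singleton,
      List.sum_singleton] at hB'
  · have hAC' := hdiff (p + k * [Letter.A, .C].length) p
    rwa [hz.apply_add_mul_length hAC, add_sub_cancel_left, nsmul_eq_mul, List.map_cons,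
      List.map_singleton, List.sum_pair, Function.comp_apply, Function.comp_apply,
      ← map_add] at hAC'

lemma BoundedOn3ietWords.cross_eq_cross {ψ : Letter → ℤ × ℤ} (hψ : BoundedOn3ietWords ψ) :
    cross (ψ .B) (ψ .C) = cross (ψ .A) (ψ .B) ∧ cross (ψ .A) (ψ .C) = cross (ψ .A) (ψ .B) := by
  have hB : cross (ψ .B) (ψ .A + ψ .C) = 0 := hψ.cross_eq_zero
  have himage : cross (ψ .A + ψ .B) (ψ .A + (ψ .A + ψ .C)) = 0 := by
    simpa [imageWeight, returnMorph] using
      (boundedOn3ietWords_imageWeight (preserves3iet_returnMorph 0) hψ).cross_eq_zero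
  simp only [cross, Prod.fst_add, Prod.snd_add] at hB himage ⊢
  constructor
  · linear_combination hB
  · linear_combination himage - hB

lemma eq_zero_of_cross_eq_zero {v w d : ℤ × ℤ} (hvw : cross v w ≠ 0) (hv : cross v d = 0)
    (hw : cross w d = 0) : d = 0 := by
  simp only [cross] at hvw hv hw
  ext
  · refine (mul_eq_zero.1 ?_).resolve_left hvw
    linear_combination w.1 * hv - v.1 * hw
  · refine (mul_eq_zero.1 ?_).resolve_left hvw
    linear_combination w.2 * hv - v.2 * hw

lemma BoundedOn3ietWords.add_eq {ψ : Letter → ℤ × ℤ} (hψ : BoundedOn3ietWords ψ)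
    (hne : cross (ψ .A) (ψ .B) ≠ 0) : ψ .A + ψ .C = ψ .B := by
  obtain ⟨hBC, hAC⟩ := hψ.cross_eq_cross
  refine sub_eq_zero.1 (eq_zero_of_cross_eq_zero hne ?_ ?_)
  · simp only [cross, Prod.fst_add, Prod.snd_add, Prod.fst_sub, Prod.snd_sub] at hAC ⊢
    linear_combination hAC
  · simp only [cross, Prod.fst_add, Prod.snd_add, Prod.fst_sub, Prod.snd_sub] at hBC ⊢
    linear_combination hBC

lemma sum_map_binaryParikh (w : List Letter) : (w.map binaryParikh).sum =
    ((w.count .A : ℤ) + w.count .B, (w.count .B : ℤ) + w.count .C) := by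
  induction w with
  | nil => rfl
  | cons a w ih =>
    rw [List.map_cons, List.sum_cons, ih]
    cases a <;> ext <;> simp [binaryParikh] <;> ring

lemma imageWeight_binaryParikh_ltr (φ : Morph) (i : Fin 3) : imageWeight φ binaryParikh (ltr i) =
    (incMat φ i 0 + incMat φ i 1, incMat φ i 1 + incMat φ i 2) :=
  sum_map_binaryParikh _

lemma det_incMat (φ : Morph) : (incMat φ).det =
    -(incMat φ 0 1 * cross (imageWeight φ binaryParikh .B) (imageWeight φ binaryParikh .C) -
      incMat φ 1 1 * cross (imageWeight φ binaryParikh .A) (imageWeight φ binaryParikh .C) +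
      incMat φ 2 1 * cross (imageWeight φ binaryParikh .A) (imageWeight φ binaryParikh .B)) := by
  rw [show Letter.A = ltr 0 from rfl, show Letter.B = ltr 1 from rfl,
    show Letter.C = ltr 2 from rfl, Matrix.det_fin_three]
  simp only [imageWeight_binaryParikh_ltr, cross]
  ring

lemma RPhi3iet_subset_altMonoid : RPhi3iet ⊆ altMonoid := by
  rintro _ ⟨φ, hφ, rfl, hdet⟩
  have hψ := boundedOn3ietWords_imageWeight hφ boundedOn3ietWords_binaryParikh
  have hne : cross (imageWeight φ binaryParikh .A) (imageWeight φ binaryParikh .B) ≠ 0 := by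
    intro hzero
    obtain ⟨hBC, hAC⟩ := hψ.cross_eq_cross
    exact hdet (by rw [det_incMat, hBC, hAC, hzero]; ring)
  have hadd : imageWeight φ binaryParikh (ltr 0) + imageWeight φ binaryParikh (ltr 2) =
      imageWeight φ binaryParikh (ltr 1) := hψ.add_eq hne
  simp only [imageWeight_binaryParikh_ltr, Prod.mk_add_mk, Prod.mk.injEq] at hadd
  exact ⟨fun _ _ => Int.natCast_nonneg _, _,
    vecMul_eq_smul_iff.2 ⟨rfl, by linarith [hadd.1], by linarith [hadd.1, hadd.2]⟩⟩

/-- The monoid R(Φ_3iet) is not finitely generated: there is no finite set S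
of matrices contained in R(Φ_3iet) such that the multiplicative submonoid
generated by S equals R(Φ_3iet). -/
theorem RPhi3iet_not_finitely_generated :
    ¬ ∃ S : Finset (Matrix (Fin 3) (Fin 3) ℤ),
      (↑S : Set (Matrix (Fin 3) (Fin 3) ℤ)) ⊆ RPhi3iet ∧
      ∀ M : Matrix (Fin 3) (Fin 3) ℤ,
        M ∈ RPhi3iet ↔ M ∈ Submonoid.closure (↑S : Set (Matrix (Fin 3) (Fin 3) ℤ)) := by
  rintro ⟨S, hS, hgen⟩
  have hfinite := finite_setOf_irreducible_coe_mem_closure S.finite_toSet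
    (hS.trans RPhi3iet_subset_altMonoid)
  refine Set.infinite_of_injective_forall_mem
    (f := fun n : ℕ => (⟨returnMat (n + 1), returnMat_mem_altMonoid _⟩ : altMonoid))
    (fun m n hmn => ?_) (fun n => ?_) hfinite
  · exact Nat.succ_injective (returnMat_injective (congrArg Subtype.val hmn))
  · exact ⟨(hgen _).1 (returnMat_mem_RPhi3iet _), irreducible_returnMat n.succ_ne_zero⟩
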